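/- Let T : ℝ² → ℝ be a smooth field of symmetric trace-free 2×2 matrices (T₁₁ + T₂₂ = 0, T₁₂ = T₂₁) such that for every multi-index β one has ∂^β T_{ij}(x) = o(|x|^{−3/2−|β|}) as |x| → ∞, for all i,j. Then there exists a unique smooth vector field β : ℝ² → ℝ² with β(x) → 0 as |x| → ∞ satisfying the flat conformal Killing equation ∂_i β_j + ∂_j β_i − δ_{ij}(∂₁β₁ + ∂₂β₂) = T_{ij} on ℝ². Moreover this solution satisfies β(x) = o(|x|^{−1/2}) as |x| → ∞. -/

import Mathlib

/-!
Identify `ℝ²` with `ℂ`. A symmetric trace-free `T` becomes the function `h = (T₁₁ + i T₁₂) / 2`, and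
the conformal Killing equation for a vector field `f` becomes `∂f/∂z̄ = h`. It is solved by the
Cauchy transform `f z = π⁻¹ ∫ h w / (z - w) dw`: near a given point, cut `h` into a compactly
supported part, to which the Cauchy–Pompeiu formula applies, and a part vanishing on a large disc,
whose transform is holomorphic there. For the decay, the substitution `w = z u` bounds
`|z|^(a - 1) |f z|` by the integral of `|z u|^a |h (z u)|` against the kernel
`|u|^(-a) |u - 1|⁻¹`, integrable for `1 < a < 2`, and dominated convergence applies. The difference
of two solutions is an entire function tending to `0`, hence vanishes by Liouville's theorem.
-/

open Real Filter Asymptotics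

noncomputable section

/-- Partial derivative of a scalar function on ℝ² in the i-th coordinate direction. -/
def pd2 (i : Fin 2) (g : EuclideanSpace ℝ (Fin 2) → ℝ) (x : EuclideanSpace ℝ (Fin 2)) : ℝ :=
  fderiv ℝ g x (EuclideanSpace.single i 1)

/-- The flat conformal Killing operator applied to a vector field β on ℝ² :
`(𝓛β)_{ij} = ∂_i β_j + ∂_j β_i − δ_{ij} ∂_c β^c`. -/
def confKilling (β : EuclideanSpace ℝ (Fin 2) → EuclideanSpace ℝ (Fin 2))
    (x : EuclideanSpace ℝ (Fin 2)) (i j : Fin 2) : ℝ :=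
  pd2 i (fun y => β y j) x + pd2 j (fun y => β y i) x -
    (if i = j then 1 else 0) * ∑ c, pd2 c (fun y => β y c) x

section PowerKernels

open MeasureTheory Module

lemma rpow_neg_mul_rpow_neg_le {p q c a b : ℝ} (hp : 0 ≤ p) (hq : 0 ≤ q) (hc : 0 < c)
    (ha : 0 ≤ a) (hb : 0 ≤ b) (hpq : c ≤ p + q) :
    p ^ (-a) * q ^ (-b) ≤ (c / 2) ^ (-b) * p ^ (-a) + (c / 2) ^ (-a) * q ^ (-b) := by
  rcases le_total p q with h | h
  · have hqb : q ^ (-b) ≤ (c / 2) ^ (-b) :=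
      rpow_le_rpow_of_nonpos (by positivity) (by linarith) (by linarith)
    rw [mul_comm]
    exact le_add_of_le_of_nonneg (by gcongr) (by positivity)
  · have hpa : p ^ (-a) ≤ (c / 2) ^ (-a) :=
      rpow_le_rpow_of_nonpos (by positivity) (by linarith) (by linarith)
    exact le_add_of_nonneg_of_le (by positivity) (by gcongr)

variable {V : Type*} [NormedAddCommGroup V]

lemma isBigO_norm_sub_rpow_neg [ProperSpace V] (v : V) {a : ℝ} (ha : 0 ≤ a) :
    (fun u => ‖u - v‖ ^ (-a)) =O[cocompact V] fun u => (1 + ‖u‖) ^ (-a) := by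
  refine .of_bound (2 ^ a) ?_
  filter_upwards [tendsto_norm_cocompact_atTop.eventually_ge_atTop (2 * ‖v‖ + 1)] with u hu
  have hle : (1 + ‖u‖) / 2 ≤ ‖u - v‖ := by linarith [norm_sub_norm_le u v]
  rw [norm_of_nonneg (by positivity), norm_of_nonneg (by positivity)]
  calc ‖u - v‖ ^ (-a) ≤ ((1 + ‖u‖) / 2) ^ (-a) :=
        rpow_le_rpow_of_nonpos (by positivity) hle (by linarith)
    _ = 2 ^ a * (1 + ‖u‖) ^ (-a) := by
        rw [div_rpow (by positivity) two_pos.le, rpow_neg two_pos.le, div_inv_eq_mul, mul_comm]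

variable [NormedSpace ℝ V] [FiniteDimensional ℝ V] [MeasurableSpace V] [BorelSpace V]
  (μ : Measure V) [μ.IsAddHaarMeasure]

lemma locallyIntegrable_norm_sub_rpow_neg (v : V) {a : ℝ} (ha : 0 ≤ a) (ha' : a < finrank ℝ V) :
    LocallyIntegrable (fun u => ‖u - v‖ ^ (-a)) μ := by
  have hdim : 1 ≤ finrank ℝ V := by exact_mod_cast ha.trans_lt ha'
  have h0 : LocallyIntegrable (fun u : V => ‖u‖ ^ (-a)) μ :=
    locallyIntegrable_of_norm_le_rpow hdim ha' (C := 1)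
      (ae_of_all _ fun u => by rw [norm_of_nonneg (by positivity), one_mul])
      (Measurable.aestronglyMeasurable (by fun_prop))
  have hmap : μ.map (Homeomorph.subRight v) = μ := map_sub_right_eq_self μ v
  rw [← hmap, locallyIntegrable_map_homeomorph] at h0
  exact h0

lemma integrable_norm_rpow_neg_mul_norm_sub_rpow_neg {v : V} (hv : v ≠ 0) {a b : ℝ}
    (ha : 0 ≤ a) (ha' : a < finrank ℝ V) (hb : 0 ≤ b) (hb' : b < finrank ℝ V)
    (hab : finrank ℝ V < a + b) :
    Integrable (fun u => ‖u‖ ^ (-a) * ‖u - v‖ ^ (-b)) μ := by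
  have := FiniteDimensional.proper_real V
  have hloc : LocallyIntegrable (fun u => ‖u‖ ^ (-a) * ‖u - v‖ ^ (-b)) μ := by
    have ha₀ : LocallyIntegrable (fun u : V => ‖u‖ ^ (-a)) μ := by
      simpa using locallyIntegrable_norm_sub_rpow_neg μ 0 ha ha'
    refine ((ha₀.smul ((‖v‖ / 2) ^ (-b))).add
      ((locallyIntegrable_norm_sub_rpow_neg μ v hb hb').smul ((‖v‖ / 2) ^ (-a)))).mono
      (Measurable.aestronglyMeasurable (by fun_prop)) (ae_of_all _ fun u => ?_)
    have htri : ‖v‖ ≤ ‖u‖ + ‖u - v‖ := by simpa using norm_sub_le u (u - v)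
    refine (norm_of_nonneg (by positivity)).trans_le (le_trans ?_ (le_norm_self _))
    exact rpow_neg_mul_rpow_neg_le (norm_nonneg _) (norm_nonneg _) (norm_pos_iff.2 hv) ha hb htri
  have hbig : (fun u => ‖u‖ ^ (-a) * ‖u - v‖ ^ (-b)) =O[cocompact V]
      fun u => (1 + ‖u‖) ^ (-(a + b)) := by
    have := (isBigO_norm_sub_rpow_neg (0 : V) ha).mul (isBigO_norm_sub_rpow_neg v hb)
    refine (this.congr_left fun u => by rw [sub_zero]).congr_right fun u => ?_
    rw [← rpow_add (by positivity), neg_add]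
  exact hloc.integrable_of_isBigO_cocompact hbig
    ((integrable_one_add_norm hab).integrableAtFilter _)

end PowerKernels

section Scaling

open MeasureTheory Complex

lemma integral_comp_mul_left_complex {E : Type*} [NormedAddCommGroup E] [NormedSpace ℝ E]
    (f : ℂ → E) {z : ℂ} (hz : z ≠ 0) : ∫ w, f (z * w) = (‖z‖ ^ 2)⁻¹ • ∫ w, f w := by
  have hdet : LinearMap.det (LinearMap.mulLeft ℝ z) = ‖z‖ ^ 2 :=
    (Algebra.norm_complex_apply z).trans (normSq_eq_norm_sq z)
  have hdet0 : LinearMap.det (LinearMap.mulLeft ℝ z) ≠ 0 := by rw [hdet]; positivity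
  have hmap := Measure.map_linearMap_addHaar_eq_smul_addHaar volume hdet0
  calc ∫ w, f (z * w) = ∫ w, f w ∂volume.map (LinearMap.mulLeft ℝ z) :=
        ((Homeomorph.mulLeft₀ z hz).measurableEmbedding.integral_map f).symm
    _ = (‖z‖ ^ 2)⁻¹ • ∫ w, f w := by
        rw [hmap, integral_smul_measure, hdet, ENNReal.toReal_ofReal (by positivity),
          abs_of_nonneg (by positivity)]

end Scaling

section Dbar

open Complex (I)
open scoped Topology ComplexConjugate

variable {E : Type*} [NormedAddCommGroup E] [NormedSpace ℂ E] {f g : ℂ → E} {z : ℂ}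

/-- The Wirtinger derivative `∂f/∂z̄ = (∂₁f + i ∂₂f) / 2` of a vector-valued function on `ℂ`. Like
`fderiv`, it takes a junk value where `f` is not real differentiable. -/
def dbar (f : ℂ → E) (z : ℂ) : E :=
  (1 / 2 : ℂ) • (fderiv ℝ f z 1 + I • fderiv ℝ f z I)

lemma two_mul_re_dbar (f : ℂ → ℂ) (z : ℂ) :
    2 * (dbar f z).re = (fderiv ℝ f z 1).re - (fderiv ℝ f z I).im := by
  simp [dbar, sub_eq_add_neg]

lemma two_mul_im_dbar (f : ℂ → ℂ) (z : ℂ) :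
    2 * (dbar f z).im = (fderiv ℝ f z 1).im + (fderiv ℝ f z I).re := by
  simp [dbar]

lemma dbar_sub (hf : DifferentiableAt ℝ f z) (hg : DifferentiableAt ℝ g z) :
    dbar (f - g) z = dbar f z - dbar g z := by
  simp only [dbar, fderiv_sub hf hg, sub_apply]
  module

lemma differentiableAt_complex_iff_dbar_eq_zero :
    DifferentiableAt ℂ f z ↔ DifferentiableAt ℝ f z ∧ dbar f z = 0 := by
  rw [differentiableAt_complex_iff_differentiableAt_real]
  refine and_congr_right fun _ => ?_
  have hI : I • (I • fderiv ℝ f z I) = -fderiv ℝ f z I := by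
    rw [smul_smul, Complex.I_mul_I, neg_one_smul]
  rw [dbar, smul_eq_zero_iff_right (by norm_num), ← smul_eq_zero_iff_right Complex.I_ne_zero,
    smul_add, hI, ← sub_eq_add_neg, sub_eq_zero, eq_comm]

lemma eq_of_dbar_eq_of_tendsto_cocompact (hf : Differentiable ℝ f) (hg : Differentiable ℝ g)
    (hfg : ∀ z, dbar f z = dbar g z) (hf₀ : Tendsto f (cocompact ℂ) (𝓝 0))
    (hg₀ : Tendsto g (cocompact ℂ) (𝓝 0)) : f = g := by
  have hd : Differentiable ℂ (f - g) := fun z =>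
    differentiableAt_complex_iff_dbar_eq_zero.2
      ⟨(hf z).sub (hg z), by rw [dbar_sub (hf z) (hg z), hfg, sub_self]⟩
  have h₀ : Tendsto (f - g) (cocompact ℂ) (𝓝 0) := by simpa only [sub_zero] using! hf₀.sub hg₀
  exact sub_eq_zero.1 (funext fun z => hd.apply_eq_of_tendsto_cocompact z h₀)

lemma apply_add_I_smul_apply_I_mul (D : ℂ →L[ℝ] E) (v : ℂ) :
    D v + I • D (I * v) = conj v • (D 1 + I • D I) := by
  have hv : v = v.re • (1 : ℂ) + v.im • I := by simp
  have hIv : I * v = (-v.im) • (1 : ℂ) + v.re • I := by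
    rw [Complex.ext_iff]; simp
  have hc : conj v = (v.re : ℂ) - v.im * I := by
    rw [Complex.ext_iff]; simp
  rw [hIv, hc]
  nth_rw 1 [hv]
  simp only [map_add, map_smul]
  simp only [← Complex.coe_smul]
  match_scalars
  · ring
  · linear_combination (v.im : ℂ) * Complex.I_sq

end Dbar

section CauchyPompeiu

open MeasureTheory
open Complex (I)
open scoped Topology ComplexConjugate

lemma integrableOn_Ioi_prod_Ioo {F : Type*} [NormedAddCommGroup F] {φ : ℝ × ℝ → F}
    (hφ : Continuous φ) {R : ℝ} (hR : ∀ p, R < p.1 → φ p = 0) (a b c : ℝ) :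
    IntegrableOn φ (Set.Ioi a ×ˢ Set.Ioo b c) := by
  have hK : IsCompact (Set.Icc a R ×ˢ Set.Icc b c) := isCompact_Icc.prod isCompact_Icc
  refine (hφ.continuousOn.integrableOn_compact hK).of_forall_sdiff_eq_zero
    (measurableSet_Ioi.prod measurableSet_Ioo) fun p ⟨⟨hp₁, hp₂⟩, hp⟩ => hR p ?_
  by_contra! hle
  exact hp ⟨⟨le_of_lt hp₁, hle⟩, Set.Ioo_subset_Icc_self hp₂⟩

section RealVariable

variable {F : Type*} [NormedAddCommGroup F] [NormedSpace ℝ F]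

lemma integral_Ioi_fderiv_smul [CompleteSpace F] {V : Type*} [NormedAddCommGroup V]
    [NormedSpace ℝ V] {h : V → F} (hc : HasCompactSupport h) (hh : ContDiff ℝ 1 h)
    {v : V} (hv : v ≠ 0) :
    ∫ r in Set.Ioi (0 : ℝ), fderiv ℝ h (r • v) v = -h 0 := by
  have hderiv (r : ℝ) : fderiv ℝ h (r • v) v = deriv (fun r : ℝ => h (r • v)) r := by
    have hv' : HasDerivAt (fun r : ℝ => r • v) v r := by
      simpa using (hasDerivAt_id r).smul_const v
    exact ((hh.differentiable one_ne_zero _).hasFDerivAt.comp_hasDerivAt r hv').deriv.symm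
  simp only [hderiv]
  have hsmooth : ContDiff ℝ 1 fun r : ℝ => h (r • v) :=
    hh.comp (contDiff_id.smul contDiff_const)
  rw [(hc.comp_isClosedEmbedding (isClosedEmbedding_smul_left hv)).integral_Ioi_deriv_eq hsmooth,
    zero_smul]

lemma integral_Ioo_fderiv_circleMap [CompleteSpace F] {h : ℂ → F} (hh : ContDiff ℝ 1 h)
    (c : ℂ) (r : ℝ) :
    ∫ θ in Set.Ioo (-π) π, fderiv ℝ h (circleMap c r θ) (circleMap 0 r θ * I) = 0 := by
  have hderiv (θ : ℝ) : HasDerivAt (fun θ => h (circleMap c r θ))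
      (fderiv ℝ h (circleMap c r θ) (circleMap 0 r θ * I)) θ :=
    (hh.differentiable one_ne_zero _).hasFDerivAt.comp_hasDerivAt θ (hasDerivAt_circleMap c r θ)
  have hcont : Continuous fun θ => fderiv ℝ h (circleMap c r θ) (circleMap 0 r θ * I) :=
    ((hh.continuous_fderiv one_ne_zero).comp (continuous_circleMap c r)).clm_apply
      ((continuous_circleMap 0 r).mul_const I)
  have hper : circleMap c r π = circleMap c r (-π) := by
    rw [← periodic_circleMap c r (-π)]
    congr 1
    ring
  rw [← integral_Ioc_eq_integral_Ioo, ← intervalIntegral.integral_of_le (by linarith [pi_pos]),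
    intervalIntegral.integral_eq_sub_of_hasDerivAt (fun θ _ => hderiv θ)
      (hcont.intervalIntegrable _ _), hper, sub_self]

lemma circleMap_zero_eq_smul (r θ : ℝ) : circleMap 0 r θ = r • circleMap 0 1 θ := by
  simp [circleMap]

lemma integrableOn_fderiv_polar {h : ℂ → F} (hc : HasCompactSupport h) (hh : ContDiff ℝ 1 h)
    (ζ : ℂ) : IntegrableOn
      (fun p : ℝ × ℝ => fderiv ℝ h (p.1 • circleMap 0 1 p.2) (circleMap 0 1 p.2 * ζ))
      (Set.Ioi 0 ×ˢ Set.Ioo (-π) π) := by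
  obtain ⟨R, -, hR⟩ := (hc.fderiv ℝ).exists_pos_le_norm
  have hcircle : Continuous fun p : ℝ × ℝ => circleMap 0 1 p.2 :=
    (continuous_circleMap 0 1).comp continuous_snd
  refine integrableOn_Ioi_prod_Ioo (((hh.continuous_fderiv one_ne_zero).comp
    (continuous_fst.smul hcircle)).clm_apply (hcircle.mul_const ζ)) (R := R) (fun p hp => ?_) _ _ _
  have hRp : R ≤ ‖p.1 • circleMap 0 1 p.2‖ := by
    simpa [norm_smul] using hp.le.trans (le_abs_self _)
  exact DFunLike.congr_fun (hR _ hRp) _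

variable [CompleteSpace F] {h : ℂ → F}

lemma integral_polar_fderiv_radial (hc : HasCompactSupport h) (hh : ContDiff ℝ 1 h) :
    ∫ p in Set.Ioi (0 : ℝ) ×ˢ Set.Ioo (-π) π,
      fderiv ℝ h (p.1 • circleMap 0 1 p.2) (circleMap 0 1 p.2) = -(2 * π) • h 0 := by
  have hint := integrableOn_fderiv_polar hc hh 1
  simp only [mul_one] at hint
  rw [Measure.volume_eq_prod, ← setIntegral_prod_swap]
  refine (setIntegral_prod _ hint.swap).trans ?_
  simp only [Function.comp_apply, Prod.swap,
    integral_Ioi_fderiv_smul hc hh (circleMap_ne_center one_ne_zero)]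
  rw [setIntegral_const, volume_real_Ioo_of_le (by linarith [pi_pos])]
  module

lemma integral_polar_fderiv_angular (hc : HasCompactSupport h) (hh : ContDiff ℝ 1 h) :
    ∫ p in Set.Ioi (0 : ℝ) ×ˢ Set.Ioo (-π) π,
      fderiv ℝ h (p.1 • circleMap 0 1 p.2) (circleMap 0 1 p.2 * I) = 0 := by
  rw [Measure.volume_eq_prod, setIntegral_prod _ (integrableOn_fderiv_polar hc hh I)]
  refine setIntegral_eq_zero_of_forall_eq_zero fun r hr => ?_
  have hcircle := integral_Ioo_fderiv_circleMap hh 0 r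
  simp only [circleMap_zero_eq_smul r, smul_mul_assoc, map_smul, integral_smul] at hcircle
  exact (smul_eq_zero_iff_right (ne_of_gt hr)).1 hcircle

end RealVariable

/-- The fundamental solution `1 / (π w)` of `∂/∂w̄`. -/
def cauchyKernel (w : ℂ) : ℂ := (π * w)⁻¹

variable {E : Type*} [NormedAddCommGroup E] [NormedSpace ℂ E] {h : ℂ → E}

lemma cauchyKernel_smul_dbar_polar (h : ℂ → E) {r : ℝ} (hr : r ≠ 0) (θ : ℝ) :
    r • cauchyKernel (circleMap 0 r θ) • dbar h (circleMap 0 r θ) =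
      (2 * π)⁻¹ • (fderiv ℝ h (r • circleMap 0 1 θ) (circleMap 0 1 θ) +
        I • fderiv ℝ h (r • circleMap 0 1 θ) (circleMap 0 1 θ * I)) := by
  have hinv : conj (circleMap 0 1 θ) = (circleMap 0 1 θ)⁻¹ :=
    (Complex.inv_eq_conj (by simp)).symm
  have hpolar : (r : ℂ) * cauchyKernel (r • circleMap 0 1 θ) * (1 / 2) =
      ((2 * π)⁻¹ : ℝ) * (circleMap 0 1 θ)⁻¹ := by
    have hr' : (r : ℂ) ≠ 0 := Complex.ofReal_ne_zero.2 hr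
    rw [cauchyKernel, Complex.real_smul]
    push_cast
    field_simp
  rw [mul_comm _ I, apply_add_I_smul_apply_I_mul, circleMap_zero_eq_smul r, dbar, hinv]
  simp only [← Complex.coe_smul, smul_smul, ← mul_assoc] at hpolar ⊢
  rw [hpolar]

/-- The Cauchy–Pompeiu formula. In polar coordinates the integrand splits into a radial derivative,
which integrates to a multiple of `h 0`, and an angular one, which integrates to `0`. -/
lemma integral_cauchyKernel_smul_dbar [CompleteSpace E] (hc : HasCompactSupport h)
    (hh : ContDiff ℝ 1 h) : ∫ w, cauchyKernel w • dbar h w = -h 0 := by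
  set S : Set (ℝ × ℝ) := Set.Ioi 0 ×ˢ Set.Ioo (-π) π
  have hint₁ := integrableOn_fderiv_polar hc hh 1
  have hintI := integrableOn_fderiv_polar hc hh I
  simp only [mul_one] at hint₁
  have hpolar (p : ℝ × ℝ) : (Complex.polarCoord.symm p : ℂ) = circleMap 0 p.1 p.2 := by
    rw [Complex.polarCoord_symm_apply, circleMap_zero, Complex.exp_mul_I, Complex.ofReal_cos,
      Complex.ofReal_sin]
  calc ∫ w, cauchyKernel w • dbar h w
      = ∫ p in S, (2 * π)⁻¹ • (fderiv ℝ h (p.1 • circleMap 0 1 p.2) (circleMap 0 1 p.2) +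
          I • fderiv ℝ h (p.1 • circleMap 0 1 p.2) (circleMap 0 1 p.2 * I)) := by
        rw [← Complex.integral_comp_polarCoord_symm, polarCoord_target]
        refine setIntegral_congr_fun (measurableSet_Ioi.prod measurableSet_Ioo) fun p hp => ?_
        simp only [hpolar, cauchyKernel_smul_dbar_polar h (ne_of_gt hp.1)]
    _ = (2 * π)⁻¹ • (-(2 * π) • h 0) := by
        rw [integral_smul, integral_add hint₁ (hintI.fun_smul I), integral_smul,
          integral_polar_fderiv_radial hc hh, integral_polar_fderiv_angular hc hh, smul_zero,
          add_zero]
    _ = -h 0 := by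
        rw [smul_smul, mul_neg, inv_mul_cancel₀ two_pi_pos.ne', neg_one_smul]

end CauchyPompeiu

section CauchyTransform

open MeasureTheory
open Complex (I)
open scoped Topology Convolution

lemma norm_cauchyKernel (w : ℂ) : ‖cauchyKernel w‖ = π⁻¹ * ‖w‖⁻¹ := by
  simp [cauchyKernel, abs_of_pos pi_pos, mul_comm]

@[fun_prop]
lemma measurable_cauchyKernel : Measurable cauchyKernel :=
  (measurable_const.mul measurable_id).inv

lemma locallyIntegrable_cauchyKernel : LocallyIntegrable cauchyKernel := by
  refine locallyIntegrable_of_norm_le_rpow (C := π⁻¹) (α := 1) (by simp) (by simp)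
    (ae_of_all _ fun w => ?_) measurable_cauchyKernel.aestronglyMeasurable
  rw [norm_cauchyKernel, rpow_neg_one]

lemma cauchyKernel_neg (w : ℂ) : cauchyKernel (-w) = -cauchyKernel w := by
  rw [cauchyKernel, mul_neg, inv_neg, cauchyKernel]

lemma hasDerivAt_cauchyKernel {w : ℂ} (hw : w ≠ 0) :
    HasDerivAt cauchyKernel (-π * cauchyKernel w ^ 2) w := by
  have hπ : (π : ℂ) ≠ 0 := by exact_mod_cast pi_ne_zero
  refine (((hasDerivAt_id w).const_mul (π : ℂ)).fun_inv (mul_ne_zero hπ hw)).congr_deriv ?_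
  simp only [cauchyKernel, id_eq]
  field_simp

lemma norm_cauchyKernel_sub_le {z w : ℂ} {r R : ℝ} (hz : ‖z‖ ≤ r) (hr : r < R) (hw : R ≤ ‖w‖) :
    ‖cauchyKernel (z - w)‖ ≤ (1 - r / R)⁻¹ * ‖cauchyKernel w‖ := by
  have hR : 0 < R := (norm_nonneg z).trans_lt (hz.trans_lt hr)
  have hc : 0 < 1 - r / R := sub_pos.2 ((div_lt_one hR).2 hr)
  have hle : (1 - r / R) * ‖w‖ ≤ ‖z - w‖ := by
    have hrw : r ≤ r / R * ‖w‖ := by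
      rw [div_mul_eq_mul_div, le_div_iff₀ hR]
      exact mul_le_mul_of_nonneg_left hw ((norm_nonneg z).trans hz)
    linarith [norm_sub_norm_le w z, norm_sub_rev z w]
  have hpos : 0 < (1 - r / R) * ‖w‖ := mul_pos hc (hR.trans_le hw)
  rw [norm_cauchyKernel, norm_cauchyKernel, mul_left_comm, ← mul_inv (1 - r / R)]
  gcongr

lemma norm_cauchyKernel_sub_sq_le {z w : ℂ} {r R : ℝ} (hz : ‖z‖ ≤ r) (hr : r < R) (hw : R ≤ ‖w‖) :
    π * ‖cauchyKernel (z - w)‖ ^ 2 ≤ (1 - r / R)⁻¹ ^ 2 * R⁻¹ * ‖cauchyKernel w‖ := by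
  have hR : 0 < R := (norm_nonneg z).trans_lt (hz.trans_lt hr)
  calc π * ‖cauchyKernel (z - w)‖ ^ 2 ≤ π * ((1 - r / R)⁻¹ * ‖cauchyKernel w‖) ^ 2 := by
        gcongr
        exact norm_cauchyKernel_sub_le hz hr hw
    _ = (1 - r / R)⁻¹ ^ 2 * ‖w‖⁻¹ * ‖cauchyKernel w‖ := by
        rw [norm_cauchyKernel]
        field_simp
    _ ≤ (1 - r / R)⁻¹ ^ 2 * R⁻¹ * ‖cauchyKernel w‖ := by gcongr

variable {E : Type*} [NormedAddCommGroup E] [NormedSpace ℂ E] {h : ℂ → E}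

/-- The Cauchy transform `z ↦ π⁻¹ ∫ h w / (z - w) dw`, the convolution of `h` with the fundamental
solution of `∂/∂z̄`. -/
def cauchyTransform (h : ℂ → E) (z : ℂ) : E := ∫ w, cauchyKernel (z - w) • h w

lemma cauchyTransform_eq_convolution (h : ℂ → E) :
    cauchyTransform h = cauchyKernel ⋆[ContinuousLinearMap.lsmul ℝ ℂ] h :=
  funext fun z => (convolution_eq_swap (x := z) (ContinuousLinearMap.lsmul ℝ ℂ)).symm

lemma contDiff_cauchyTransform_of_hasCompactSupport {n : ℕ∞} (hc : HasCompactSupport h)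
    (hh : ContDiff ℝ n h) : ContDiff ℝ n (cauchyTransform h) := by
  rw [cauchyTransform_eq_convolution]
  exact hc.contDiff_convolution_right _ locallyIntegrable_cauchyKernel hh

lemma dbar_comp_const_sub {z w : ℂ} (hh : DifferentiableAt ℝ h (z - w)) :
    dbar (fun w => h (z - w)) w = -dbar h (z - w) := by
  have hD : HasFDerivAt (fun w => h (z - w)) (-fderiv ℝ h (z - w)) w := by
    simpa using! hh.hasFDerivAt.comp w ((hasFDerivAt_id w).const_sub z)
  simp only [dbar, hD.fderiv, neg_apply]
  module

lemma dbar_cauchyTransform_of_hasCompactSupport [CompleteSpace E] (hc : HasCompactSupport h)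
    (hh : ContDiff ℝ 1 h) (z : ℂ) : dbar (cauchyTransform h) z = h z := by
  have hderiv (v : ℂ) : fderiv ℝ (cauchyTransform h) z v =
      ∫ w, cauchyKernel w • fderiv ℝ h (z - w) v := by
    rw [cauchyTransform_eq_convolution, (hc.hasFDerivAt_convolution_right _
      locallyIntegrable_cauchyKernel hh z).fderiv, convolution_precompR_apply _
      locallyIntegrable_cauchyKernel (hc.fderiv ℝ) (hh.continuous_fderiv one_ne_zero)]
    rfl
  have hint (v : ℂ) : Integrable fun w => cauchyKernel w • fderiv ℝ h (z - w) v :=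
    (hc.fderiv_apply ℝ v).convolutionExists_right (ContinuousLinearMap.lsmul ℝ ℂ)
      locallyIntegrable_cauchyKernel
      ((hh.continuous_fderiv one_ne_zero).clm_apply continuous_const) z
  have hc' : HasCompactSupport fun w => h (z - w) := hc.comp_homeomorph (Homeomorph.subLeft z)
  have hh' : ContDiff ℝ 1 fun w => h (z - w) := hh.comp (contDiff_const.sub contDiff_id)
  calc dbar (cauchyTransform h) z = ∫ w, cauchyKernel w • dbar h (z - w) := by
        rw [dbar, hderiv, hderiv, ← integral_smul,
          ← integral_add (hint 1) ((hint I).fun_smul I), ← integral_smul]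
        exact integral_congr_ae (ae_of_all _ fun w => by simp only [dbar]; module)
    _ = -∫ w, cauchyKernel w • dbar (fun w => h (z - w)) w := by
        simp only [dbar_comp_const_sub (hh.differentiable one_ne_zero _), smul_neg, integral_neg,
          neg_neg]
    _ = h z := by rw [integral_cauchyKernel_smul_dbar hc' hh', neg_neg, sub_zero]

lemma integrable_cauchyKernel_sub_smul_of_eq_zero (hm : AEStronglyMeasurable h)
    (hint : Integrable fun w => cauchyKernel w • h w) {R : ℝ} (hR : ∀ w, ‖w‖ < R → h w = 0)
    {z : ℂ} (hz : ‖z‖ < R) : Integrable fun w => cauchyKernel (z - w) • h w := by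
  have hmeas : AEStronglyMeasurable fun w => cauchyKernel (z - w) • h w :=
    Measurable.aestronglyMeasurable (f := fun w => cauchyKernel (z - w)) (by fun_prop) |>.smul hm
  refine (hint.norm.const_mul (1 - ‖z‖ / R)⁻¹).mono' hmeas (ae_of_all _ fun w => ?_)
  rcases lt_or_ge ‖w‖ R with hw | hw
  · simp [hR w hw]
  · rw [norm_smul, norm_smul, ← mul_assoc]
    gcongr
    exact norm_cauchyKernel_sub_le le_rfl hz hw

lemma differentiableOn_cauchyTransform_of_eq_zero (hm : AEStronglyMeasurable h)
    (hint : Integrable fun w => cauchyKernel w • h w) {R : ℝ} (hR : ∀ w, ‖w‖ < R → h w = 0) :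
    DifferentiableOn ℂ (cauchyTransform h) (Metric.ball 0 R) := fun z₀ hz₀ => by
  rw [mem_ball_zero_iff] at hz₀
  obtain ⟨r, hz₀r, hr⟩ := exists_between hz₀
  have hint' {z : ℂ} (hz : ‖z‖ < R) := integrable_cauchyKernel_sub_smul_of_eq_zero hm hint hR hz
  set F' : ℂ → ℂ → E := fun z w => (-π * cauchyKernel (z - w) ^ 2) • h w
  have hF' (w z : ℂ) (hz : ‖z‖ < r) :
      HasDerivAt (fun z => cauchyKernel (z - w) • h w) (F' z w) z := by
    rcases lt_or_ge ‖w‖ R with hw | hw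
    · simpa [F', hR w hw] using hasDerivAt_const z (0 : E)
    · have hzw : z - w ≠ 0 := sub_ne_zero.2 fun hzw => by linarith [congrArg norm hzw]
      exact ((hasDerivAt_cauchyKernel hzw).comp_sub_const z w).smul_const (h w)
  have hbound (w z : ℂ) (hz : ‖z‖ < r) :
      ‖F' z w‖ ≤ (1 - r / R)⁻¹ ^ 2 * R⁻¹ * ‖cauchyKernel w • h w‖ := by
    rcases lt_or_ge ‖w‖ R with hw | hw
    · simp [F', hR w hw]
    · rw [norm_smul, norm_smul, ← mul_assoc, norm_mul, norm_neg, norm_pow, Complex.norm_real,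
        norm_of_nonneg pi_pos.le]
      gcongr ?_ * _
      exact norm_cauchyKernel_sub_sq_le hz.le hr hw
  have hmeas : AEStronglyMeasurable (F' z₀) :=
    Measurable.aestronglyMeasurable (f := fun w => -π * cauchyKernel (z₀ - w) ^ 2)
      (by fun_prop) |>.smul hm
  have hz₀R : ∀ᶠ z in 𝓝 z₀, ‖z‖ < R := (continuous_norm.tendsto z₀).eventually_lt_const hz₀
  exact (hasDerivAt_integral_of_dominated_loc_of_deriv_le
    ((continuous_norm.tendsto z₀).eventually_lt_const hz₀r) (hz₀R.mono fun z hz => (hint' hz).1)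
    (hint' hz₀) hmeas (ae_of_all _ hbound) (hint.norm.const_mul _)
    (ae_of_all _ hF')).2.differentiableAt.differentiableWithinAt

lemma integrable_cauchyKernel_sub_smul_of_hasCompactSupport (hc : HasCompactSupport h)
    (hh : Continuous h) (z : ℂ) : Integrable fun w => cauchyKernel (z - w) • h w :=
  (hc.convolutionExists_right (ContinuousLinearMap.lsmul ℝ ℂ) locallyIntegrable_cauchyKernel hh
    z).integrable_swap

lemma exists_contDiff_differentiableOn_cauchyTransform_sub {n : ℕ∞} (hh : ContDiff ℝ n h)
    (hint : Integrable fun w => cauchyKernel w • h w) {R : ℝ}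
    (hR : 0 < R) :
    ∃ h₁ : ℂ → E, ContDiff ℝ n h₁ ∧ HasCompactSupport h₁ ∧ (∀ z, ‖z‖ < R → h₁ z = h z) ∧
      DifferentiableOn ℂ (cauchyTransform h - cauchyTransform h₁) (Metric.ball 0 R) := by
  let χ : ContDiffBump (0 : ℂ) := ⟨R, R + 1, hR, lt_add_one R⟩
  set h₁ : ℂ → E := fun z => χ z • h z with h₁_def
  have hh₁ : ContDiff ℝ n h₁ := χ.contDiff.smul hh
  have hc₁ : HasCompactSupport h₁ := χ.hasCompactSupport.smul_right
  have heq (z : ℂ) (hz : ‖z‖ < R) : h₁ z = h z := by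
    simp only [h₁_def, χ.one_of_mem_closedBall (mem_closedBall_zero_iff.2 hz.le), one_smul]
  have hint₁ := integrable_cauchyKernel_sub_smul_of_hasCompactSupport hc₁ hh₁.continuous
  have hint₂ : Integrable fun w => cauchyKernel w • (h - h₁) w := by
    simpa [cauchyKernel_neg, smul_sub, ← sub_eq_add_neg] using hint.fun_add (hint₁ 0)
  have hm₂ : AEStronglyMeasurable (h - h₁) :=
    (hh.continuous.sub hh₁.continuous).aestronglyMeasurable
  have heq₂ (z : ℂ) (hz : ‖z‖ < R) : (h - h₁) z = 0 := sub_eq_zero.2 (heq z hz).symm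
  refine ⟨h₁, hh₁, hc₁, heq, (differentiableOn_cauchyTransform_of_eq_zero hm₂ hint₂ heq₂).congr
    fun z hz => ?_⟩
  have hint₂' := integrable_cauchyKernel_sub_smul_of_eq_zero hm₂ hint₂ heq₂
    (mem_ball_zero_iff.1 hz)
  rw [Pi.sub_apply, sub_eq_iff_eq_add]
  simp only [cauchyTransform]
  rw [← integral_add hint₂' (hint₁ z)]
  simp only [Pi.sub_apply, smul_sub, sub_add_cancel]

lemma contDiff_cauchyTransform [CompleteSpace E] {n : ℕ∞} (hh : ContDiff ℝ n h)
    (hint : Integrable fun w => cauchyKernel w • h w) : ContDiff ℝ n (cauchyTransform h) := by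
  refine contDiff_iff_contDiffAt.2 fun z => ?_
  obtain ⟨h₁, hh₁, hc₁, -, hdiff⟩ := exists_contDiff_differentiableOn_cauchyTransform_sub hh hint
    (by positivity : 0 < ‖z‖ + 1)
  have hball : Metric.ball 0 (‖z‖ + 1) ∈ 𝓝 z :=
    Metric.isOpen_ball.mem_nhds (mem_ball_zero_iff.2 (lt_add_one _))
  have han : ContDiffAt ℝ n (cauchyTransform h - cauchyTransform h₁) z :=
    (hdiff.analyticAt hball).contDiffAt.restrict_scalars ℝ
  simpa using! han.add (contDiff_cauchyTransform_of_hasCompactSupport hc₁ hh₁).contDiffAt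

lemma dbar_cauchyTransform [CompleteSpace E] (hh : ContDiff ℝ 1 h)
    (hint : Integrable fun w => cauchyKernel w • h w) (z : ℂ) :
    dbar (cauchyTransform h) z = h z := by
  obtain ⟨h₁, hh₁, hc₁, heq, hdiff⟩ := exists_contDiff_differentiableOn_cauchyTransform_sub
    (n := 1) hh hint (by positivity : 0 < ‖z‖ + 1)
  have hball : Metric.ball 0 (‖z‖ + 1) ∈ 𝓝 z :=
    Metric.isOpen_ball.mem_nhds (mem_ball_zero_iff.2 (lt_add_one _))
  have hzero : dbar (cauchyTransform h - cauchyTransform h₁) z = 0 :=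
    (differentiableAt_complex_iff_dbar_eq_zero.1 (hdiff.differentiableAt hball)).2
  have hdiff₁ := (contDiff_cauchyTransform_of_hasCompactSupport (n := 1) hc₁ hh₁).differentiable
    one_ne_zero z
  have hdiffh := (contDiff_cauchyTransform (n := 1) hh hint).differentiable one_ne_zero z
  rw [dbar_sub hdiffh hdiff₁, dbar_cauchyTransform_of_hasCompactSupport hc₁ hh₁,
    heq z (lt_add_one _), sub_eq_zero] at hzero
  exact hzero

lemma integrable_cauchyKernel_smul (hh : Continuous h) {a : ℝ} (ha : 1 < a)
    (hO : h =O[cocompact ℂ] fun z => ‖z‖ ^ (-a)) : Integrable fun w => cauchyKernel w • h w := by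
  have hloc : LocallyIntegrable fun w => cauchyKernel w • h w :=
    locallyIntegrable_cauchyKernel.smul_continuous hh
  have hker : cauchyKernel =O[cocompact ℂ] fun w => ‖w‖ ^ (-1 : ℝ) :=
    .of_bound π⁻¹ (.of_forall fun w => by
      rw [norm_cauchyKernel, rpow_neg_one, norm_inv, norm_norm])
  have hdecay {b : ℝ} (hb : 0 ≤ b) :
      (fun w : ℂ => ‖w‖ ^ (-b)) =O[cocompact ℂ] fun w => (1 + ‖w‖) ^ (-b) := by
    simpa using isBigO_norm_sub_rpow_neg (0 : ℂ) hb
  have hbig : (fun w => cauchyKernel w • h w) =O[cocompact ℂ]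
      fun w => (1 + ‖w‖) ^ (-(1 + a)) := by
    refine ((hker.trans (hdecay zero_le_one)).smul (hO.trans (hdecay (by linarith)))).congr_right
      fun w => ?_
    rw [smul_eq_mul, ← rpow_add (by positivity), neg_add]
  refine hloc.integrable_of_isBigO_cocompact hbig
    ((integrable_one_add_norm ?_).integrableAtFilter _)
  rw [Complex.finrank_real_complex]
  push_cast
  linarith

lemma tendsto_integral_comp_mul_mul {φ k : ℂ → ℝ} (hφ : Continuous φ)
    (hφ₀ : Tendsto φ (cocompact ℂ) (𝓝 0)) (hk : Integrable k) :
    Tendsto (fun z => ∫ u, φ (z * u) * k u) (cocompact ℂ) (𝓝 0) := by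
  have : (cocompact ℂ).IsCountablyGenerated := by
    rw [← Metric.cobounded_eq_cocompact, ← comap_norm_atTop]
    infer_instance
  obtain ⟨M, hM⟩ := isBounded_iff_forall_norm_le.1
    (ZeroAtInftyContinuousMap.isBounded_range ⟨⟨φ, hφ⟩, hφ₀⟩)
  rw [← integral_zero ℂ ℝ]
  refine tendsto_integral_filter_of_dominated_convergence (fun u => M * ‖k u‖)
    (.of_forall fun z => ?_) (.of_forall fun z => ae_of_all _ fun u => ?_)
    (hk.norm.const_mul M) ?_
  · exact (hφ.comp (continuous_const_mul z)).aestronglyMeasurable.mul hk.1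
  · rw [norm_mul]
    gcongr
    exact hM _ ⟨z * u, rfl⟩
  · filter_upwards [Measure.ae_ne volume 0] with u hu
    have hmul : Tendsto (fun z => z * u) (cocompact ℂ) (cocompact ℂ) :=
      (Homeomorph.mulRight₀ u hu).isClosedEmbedding.tendsto_cocompact
    simpa using (hφ₀.comp hmul).mul_const (k u)

lemma norm_cauchyTransform_le (h : ℂ → E) (a : ℝ) {z : ℂ} (hz : z ≠ 0) :
    ‖cauchyTransform h z‖ ≤
      π⁻¹ * (∫ u, ‖z * u‖ ^ a * ‖h (z * u)‖ * (‖u‖ ^ (-a) * ‖u - 1‖ ^ (-1 : ℝ))) *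
        ‖z‖ ^ (1 - a) := by
  have hz' : 0 < ‖z‖ := norm_pos_iff.2 hz
  calc ‖cauchyTransform h z‖ ≤ ∫ w, ‖cauchyKernel (z - w)‖ * ‖h w‖ := by
        simpa only [cauchyTransform, norm_smul] using
          norm_integral_le_integral_norm fun w => cauchyKernel (z - w) • h w
    _ = ‖z‖ ^ 2 * ∫ u, ‖cauchyKernel (z - z * u)‖ * ‖h (z * u)‖ := by
        rw [integral_comp_mul_left_complex (fun w => ‖cauchyKernel (z - w)‖ * ‖h w‖) hz,
          smul_eq_mul, mul_inv_cancel_left₀ (by positivity)]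
    _ = ‖z‖ ^ 2 * ∫ u, (π⁻¹ * ‖z‖ ^ (-1 - a)) *
          (‖z * u‖ ^ a * ‖h (z * u)‖ * (‖u‖ ^ (-a) * ‖u - 1‖ ^ (-1 : ℝ))) := by
        congr 1
        refine integral_congr_ae ?_
        filter_upwards [Measure.ae_ne volume 0] with u hu
        have hu' : 0 < ‖u‖ := norm_pos_iff.2 hu
        rw [norm_cauchyKernel, show z - z * u = -(z * (u - 1)) by ring, norm_neg, norm_mul,
          norm_mul, mul_rpow hz'.le hu'.le, rpow_neg hu'.le, rpow_sub hz', rpow_neg_one,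
          rpow_neg_one]
        field_simp
    _ = _ := by
        rw [integral_const_mul, rpow_sub hz', rpow_sub hz', rpow_neg_one, rpow_one]
        field_simp

lemma isLittleO_cauchyTransform (hh : Continuous h) {a : ℝ} (ha : 1 < a) (ha' : a < 2)
    (ho : h =o[cocompact ℂ] fun z => ‖z‖ ^ (-a)) :
    cauchyTransform h =o[cocompact ℂ] fun z => ‖z‖ ^ (1 - a) := by
  set φ : ℂ → ℝ := fun z => ‖z‖ ^ a * ‖h z‖
  have hφ : Continuous φ := (continuous_norm.rpow_const fun _ => .inr (by linarith)).mul hh.norm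
  have hφ₀ : Tendsto φ (cocompact ℂ) (𝓝 0) := by
    refine ho.norm_left.tendsto_div_nhds_zero.congr fun z => ?_
    rw [rpow_neg (norm_nonneg z), div_inv_eq_mul, mul_comm]
  have hk : Integrable fun u : ℂ => ‖u‖ ^ (-a) * ‖u - 1‖ ^ (-1 : ℝ) := by
    refine integrable_norm_rpow_neg_mul_norm_sub_rpow_neg volume one_ne_zero (by linarith)
      ?_ zero_le_one ?_ ?_ <;> rw [Complex.finrank_real_complex] <;> push_cast <;> linarith
  have hlim := (tendsto_integral_comp_mul_mul hφ hφ₀ hk).const_mul π⁻¹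
  rw [mul_zero] at hlim
  have hne : ∀ᶠ z : ℂ in cocompact ℂ, z ≠ 0 :=
    (Set.finite_singleton 0).isCompact.compl_mem_cocompact
  refine IsBigO.trans_isLittleO (.of_bound 1 (hne.mono fun z hz => ?_))
    ((((isLittleO_one_iff ℝ).2 hlim).mul_isBigO (isBigO_refl _ _)).congr_right fun z => one_mul _)
  rw [one_mul]
  exact (norm_cauchyTransform_le h a hz).trans (le_norm_self _)

end CauchyTransform

section Plane

open Complex (I)
open scoped Topology

/-- The identification of `ℂ` with `ℝ²`. -/
def planeEquiv : ℂ ≃ₗᵢ[ℝ] EuclideanSpace ℝ (Fin 2) := Complex.orthonormalBasisOneI.repr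

lemma planeEquiv_apply_zero (z : ℂ) : planeEquiv z 0 = z.re := by
  simp [planeEquiv]

lemma planeEquiv_apply_one (z : ℂ) : planeEquiv z 1 = z.im := by
  simp [planeEquiv]

lemma planeEquiv_symm_single_zero : planeEquiv.symm (EuclideanSpace.single 0 1) = 1 := by
  simp [planeEquiv]

lemma planeEquiv_symm_single_one : planeEquiv.symm (EuclideanSpace.single 1 1) = I := by
  simp [planeEquiv]

lemma tendsto_planeEquiv_cocompact : Tendsto planeEquiv (cocompact ℂ) (cocompact _) :=
  planeEquiv.toHomeomorph.isClosedEmbedding.tendsto_cocompact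

lemma tendsto_planeEquiv_symm_cocompact : Tendsto planeEquiv.symm (cocompact _) (cocompact ℂ) :=
  planeEquiv.symm.toHomeomorph.isClosedEmbedding.tendsto_cocompact

/-- Vector fields on `ℝ²` written as complex functions of a complex variable. -/
def planeField : (ℂ → ℂ) ≃ (EuclideanSpace ℝ (Fin 2) → EuclideanSpace ℝ (Fin 2)) :=
  planeEquiv.toEquiv.conj

lemma planeField_apply (f : ℂ → ℂ) (x : EuclideanSpace ℝ (Fin 2)) :
    planeField f x = planeEquiv (f (planeEquiv.symm x)) :=
  rfl

variable {f : ℂ → ℂ}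

lemma contDiff_planeField {n : ℕ∞} (hf : ContDiff ℝ n f) : ContDiff ℝ n (planeField f) :=
  planeEquiv.contDiff.comp (hf.comp planeEquiv.symm.contDiff)

lemma differentiable_planeField_iff : Differentiable ℝ (planeField f) ↔ Differentiable ℝ f :=
  (planeEquiv.toContinuousLinearEquiv.comp_differentiable_iff (f := f ∘ planeEquiv.symm)).trans
    planeEquiv.symm.toContinuousLinearEquiv.comp_right_differentiable_iff

lemma norm_planeField (f : ℂ → ℂ) (x : EuclideanSpace ℝ (Fin 2)) :
    ‖planeField f x‖ = ‖f (planeEquiv.symm x)‖ :=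
  planeEquiv.norm_map _

lemma tendsto_of_tendsto_planeField (hf : Tendsto (planeField f) (cocompact _) (𝓝 0)) :
    Tendsto f (cocompact ℂ) (𝓝 0) := by
  rw [tendsto_zero_iff_norm_tendsto_zero] at hf ⊢
  refine (hf.comp tendsto_planeEquiv_cocompact).congr fun z => ?_
  rw [Function.comp_apply, norm_planeField, planeEquiv.symm_apply_apply]

lemma isLittleO_planeField {a : ℝ} (hf : f =o[cocompact ℂ] fun z => ‖z‖ ^ a) :
    planeField f =o[cocompact _] fun x => ‖x‖ ^ a := by
  refine .of_norm_left ((hf.norm_left.comp_tendsto tendsto_planeEquiv_symm_cocompact).congr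
    (fun x => (norm_planeField f x).symm) fun x => ?_)
  rw [Function.comp_apply, planeEquiv.symm.norm_map]

lemma pd2_clm_comp_planeEquiv_symm {x : EuclideanSpace ℝ (Fin 2)}
    (hf : DifferentiableAt ℝ f (planeEquiv.symm x)) (ℓ : ℂ →L[ℝ] ℝ) (i : Fin 2) :
    pd2 i (fun y => ℓ (f (planeEquiv.symm y))) x =
      ℓ (fderiv ℝ f (planeEquiv.symm x) (planeEquiv.symm (EuclideanSpace.single i 1))) := by
  have h := ℓ.hasFDerivAt.comp x (hf.hasFDerivAt.comp x
    planeEquiv.symm.toContinuousLinearEquiv.hasFDerivAt)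
  exact DFunLike.congr_fun h.fderiv (EuclideanSpace.single i 1)

lemma confKilling_planeField {x : EuclideanSpace ℝ (Fin 2)}
    (hf : DifferentiableAt ℝ f (planeEquiv.symm x)) (i j : Fin 2) :
    confKilling (planeField f) x i j =
      !![2 * (dbar f (planeEquiv.symm x)).re, 2 * (dbar f (planeEquiv.symm x)).im;
        2 * (dbar f (planeEquiv.symm x)).im, -(2 * (dbar f (planeEquiv.symm x)).re)] i j := by
  have hre := pd2_clm_comp_planeEquiv_symm hf Complex.reCLM
  have him := pd2_clm_comp_planeEquiv_symm hf Complex.imCLM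
  simp only [Complex.reCLM_apply, Complex.imCLM_apply] at hre him
  fin_cases i <;> fin_cases j <;>
    simp [confKilling, planeField_apply, planeEquiv_apply_zero, planeEquiv_apply_one, hre, him,
      planeEquiv_symm_single_zero, planeEquiv_symm_single_one, two_mul_re_dbar, two_mul_im_dbar,
      add_comm]

/-- The complex function `(T₁₁ + i T₁₂) / 2`, which encodes a symmetric trace-free tensor field `T`
on `ℝ²`. It is the right-hand side of the `∂/∂z̄` equation equivalent to `𝓛β = T`. -/
def complexSource (T : EuclideanSpace ℝ (Fin 2) → Matrix (Fin 2) (Fin 2) ℝ) (z : ℂ) : ℂ :=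
  (T (planeEquiv z) 0 0 + T (planeEquiv z) 0 1 * I) / 2

variable {T : EuclideanSpace ℝ (Fin 2) → Matrix (Fin 2) (Fin 2) ℝ}

lemma contDiff_complexSource {n : ℕ∞} (hT : ∀ i j, ContDiff ℝ n fun x => T x i j) :
    ContDiff ℝ n (complexSource T) := by
  have hcomp (j : Fin 2) : ContDiff ℝ n fun z : ℂ => (T (planeEquiv z) 0 j : ℂ) :=
    Complex.ofRealCLM.contDiff.comp ((hT 0 j).comp planeEquiv.contDiff)
  exact ((hcomp 0).add ((hcomp 1).mul contDiff_const)).div_const 2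

lemma isLittleO_complexSource {a : ℝ}
    (hT : ∀ i j, (fun x => T x i j) =o[cocompact _] fun x => ‖x‖ ^ a) :
    complexSource T =o[cocompact ℂ] fun z => ‖z‖ ^ a := by
  have hcomp (j : Fin 2) :
      (fun z : ℂ => (T (planeEquiv z) 0 j : ℂ)) =o[cocompact ℂ] fun z => ‖z‖ ^ a := by
    refine .of_norm_left (((hT 0 j).norm_left.comp_tendsto tendsto_planeEquiv_cocompact).congr
      (fun z => (Complex.norm_real _).symm) fun z => ?_)
    rw [Function.comp_apply, planeEquiv.norm_map]
  refine (((hcomp 0).add ((hcomp 1).const_mul_left I)).const_mul_left (1 / 2)).congr_left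
    fun z => ?_
  rw [complexSource]
  ring

lemma confKilling_planeField_eq_iff (hsym : ∀ x, T x 0 1 = T x 1 0)
    (htf : ∀ x, T x 0 0 + T x 1 1 = 0) (hf : Differentiable ℝ f) :
    (∀ x i j, confKilling (planeField f) x i j = T x i j) ↔
      ∀ z, dbar f z = complexSource T z := by
  rw [planeEquiv.surjective.forall]
  refine forall_congr' fun z => ?_
  have h11 : T (planeEquiv z) 1 1 = -T (planeEquiv z) 0 0 := by linarith [htf (planeEquiv z)]
  have hre : (complexSource T z).re = T (planeEquiv z) 0 0 / 2 := by simp [complexSource]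
  have him : (complexSource T z).im = T (planeEquiv z) 0 1 / 2 := by simp [complexSource]
  simp only [confKilling_planeField (hf _), planeEquiv.symm_apply_apply, Fin.forall_fin_two,
    Complex.ext_iff, hre, him, h11, ← hsym, Matrix.cons_val', Matrix.cons_val_zero,
    Matrix.cons_val_one, Matrix.of_apply, Matrix.cons_val_fin_one]
  grind

end Plane

theorem stmt2_general {n : ℕ∞} (hn : 1 ≤ n) {a : ℝ} (ha : 1 < a) (ha' : a < 2)
    (T : EuclideanSpace ℝ (Fin 2) → Matrix (Fin 2) (Fin 2) ℝ)
    (hT : ∀ i j, ContDiff ℝ n fun x => T x i j) (hsym : ∀ x, T x 0 1 = T x 1 0)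
    (htf : ∀ x, T x 0 0 + T x 1 1 = 0)
    (hdecay : ∀ i j, (fun x => T x i j) =o[cocompact _] fun x => ‖x‖ ^ (-a)) :
    ∃ β : EuclideanSpace ℝ (Fin 2) → EuclideanSpace ℝ (Fin 2),
      (ContDiff ℝ n β ∧ Tendsto β (cocompact _) (nhds 0) ∧
        ∀ x i j, confKilling β x i j = T x i j) ∧
      (β =o[cocompact _] fun x => ‖x‖ ^ (1 - a)) ∧
      ∀ β', Differentiable ℝ β' ∧ Tendsto β' (cocompact _) (nhds 0) ∧
        (∀ x i j, confKilling β' x i j = T x i j) → β' = β := by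
  have hh := contDiff_complexSource hT
  have ho := isLittleO_complexSource hdecay
  have hint := integrable_cauchyKernel_smul hh.continuous ha ho.isBigO
  have hf := contDiff_cauchyTransform hh hint
  have hfd := hf.differentiable (by exact_mod_cast (zero_lt_one.trans_le hn).ne')
  have hdbar := dbar_cauchyTransform (hh.of_le (by exact_mod_cast hn)) hint
  have hlittle := isLittleO_planeField (isLittleO_cauchyTransform hh.continuous ha ha' ho)
  have hzero : Tendsto (planeField (cauchyTransform (complexSource T))) (cocompact _) (nhds 0) :=
    hlittle.isBigO.trans_tendsto <| by
      simpa using! (tendsto_rpow_neg_atTop (sub_pos.2 ha)).comp tendsto_norm_cocompact_atTop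
  refine ⟨planeField (cauchyTransform (complexSource T)), ⟨contDiff_planeField hf, hzero,
    (confKilling_planeField_eq_iff hsym htf hfd).2 hdbar⟩, hlittle, fun β' ⟨hβ', hβ'₀, hβ'T⟩ => ?_⟩
  obtain ⟨g, rfl⟩ := planeField.surjective β'
  have hg := differentiable_planeField_iff.1 hβ'
  have hgT := (confKilling_planeField_eq_iff hsym htf hg).1 hβ'T
  exact congrArg planeField <| eq_of_dbar_eq_of_tendsto_cocompact hg hfd
    (fun z => (hgT z).trans (hdbar z).symm) (tendsto_of_tendsto_planeField hβ'₀)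
    (tendsto_of_tendsto_planeField hzero)

theorem stmt2
    (T : EuclideanSpace ℝ (Fin 2) → Matrix (Fin 2) (Fin 2) ℝ)
    (hTsmooth : ∀ i j, ContDiff ℝ (⊤ : ℕ∞) fun x => T x i j)
    (hTsym : ∀ x, T x 0 1 = T x 1 0)
    (hTtracefree : ∀ x, T x 0 0 + T x 1 1 = 0)
    (hTdecay : ∀ i j, ∀ m : ℕ,
      (fun x => ‖iteratedFDeriv ℝ m (fun y => T y i j) x‖)
        =o[cocompact (EuclideanSpace ℝ (Fin 2))] fun x => ‖x‖ ^ ((-3/2 : ℝ) - m)) :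
    ∃ β : EuclideanSpace ℝ (Fin 2) → EuclideanSpace ℝ (Fin 2),
      (ContDiff ℝ (⊤ : ℕ∞) β ∧
        Tendsto β (cocompact (EuclideanSpace ℝ (Fin 2))) (nhds 0) ∧
        (∀ x, ∀ i j, confKilling β x i j = T x i j)) ∧
      ((fun x => ‖β x‖)
        =o[cocompact (EuclideanSpace ℝ (Fin 2))] fun x => ‖x‖ ^ (-1/2 : ℝ)) ∧
      (∀ β' : EuclideanSpace ℝ (Fin 2) → EuclideanSpace ℝ (Fin 2),
        (ContDiff ℝ (⊤ : ℕ∞) β' ∧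
          Tendsto β' (cocompact (EuclideanSpace ℝ (Fin 2))) (nhds 0) ∧
          (∀ x, ∀ i j, confKilling β' x i j = T x i j)) → β' = β) := by
  obtain ⟨β, hβ, hlittle, huniq⟩ := stmt2_general (n := ⊤) (a := 3 / 2) le_top (by norm_num)
    (by norm_num) T hTsmooth hTsym hTtracefree fun i j => by
      simpa [← isLittleO_norm_left, neg_div] using hTdecay i j 0
  refine ⟨β, hβ, ?_, fun β' ⟨hβ', h⟩ => huniq β' ⟨hβ'.differentiable (by simp), h⟩⟩
  convert hlittle.norm_left using 3
  norm_num

end
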